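/- arXiv:1705.07484 — 2 statements merged into one kernel-verified Lean document; each statement's English description precedes it below -/
import Mathlib

section
/- Let $c$, $\mu$, $\varepsilon$ be fixed real numbers with $1 < c < 2$, $0 < \mu < 1$ and $\varepsilon > 0$. There exists a constant $C = C(c, \mu, \varepsilon) > 0$ such that for every real $X \geq 3$ and every integer $M$ with $3 \leq M \leq X$, one has $\sum_{\mu X < n \leq X} \min\left(1, \frac{1}{M \|n^c\|}\right) \leq C X^{\varepsilon} \left( X M^{-1} + M^{\frac{1}{2}} X^{\frac{c}{2}} \right)$, where the sum is over integers $n$. -/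
/-!
Write `‖t‖ = |t - round t|`. The argument is elementary and uses no exponential sums.

*Counting.* Let `f'` grow at rate at least `lam` and by at most `V` in total on `[a, b]`, and let
`S` be a set of integers `n ∈ [a, b]` with `f n` within `δ` of an integer `g n`. Fix a gap
length `L`. At most `(b - a) / L + 1` elements of `S` are not followed by another one at distance
at most `L`. For the remaining `n ∈ S`, with successor `m ∈ S`, the slope `(g m - g n) / (m - n)`
is a rational with denominator `q ≤ m - n ≤ L`, and `f' ξ` is within `2 δ / q` of it for some `ξ`
between `n` and `m`. So all `n` with the same slope lie in an interval of length
`4 δ / (q lam) + L`, and they are `q`-separated because `q` divides each gap. There are at most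
`q V + 4 δ + 1` slopes of denominator `q`, and summing over `q ≤ L` gives
`#S ≪ (b - a) / L + (V / lam) δ (1 + log L) + V L ^ 2`.

*Conclusion.* For `f x = x ^ c` on `[1, X]` the choice `L = X ^ ((2 - c) / 3)` balances the first
and last terms: `#{n ≤ X : ‖n ^ c‖ ≤ δ} ≪ δ X (1 + log X) + X ^ ((c + 1) / 3)`. Since
`min 1 (1 / (M t)) ≤ (2 / M) #{k ≤ M : t ≤ 1 / k}`, for `M ≤ X` the sum is
`≪ (X / M) (1 + log X) ^ 2 + X ^ ((c + 1) / 3)`, and the last term is at most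
`X / M + M ^ (1 / 2) X ^ (c / 2)` for every `M`.
-/

open Finset

/-! ### Separated sets and short gaps -/

theorem card_le_div_add_one_of_separated {ι : Type*} {s : Finset ι} {φ : ι → ℝ} {d D : ℝ}
    (hd : 0 < d) (hD : 0 ≤ D) (hφ : Set.InjOn φ s)
    (hgap : ∀ i ∈ s, ∀ j ∈ s, φ i < φ j → φ j - φ i ∈ Set.Icc d D) :
    (#s : ℝ) ≤ D / d + 1 := by
  rcases s.eq_empty_or_nonempty with rfl | hs
  · rw [card_empty, Nat.cast_zero]
    positivity
  obtain ⟨i₀, hi₀, hmin⟩ := s.exists_min_image φ hs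
  have hmaps : ∀ i ∈ s, ⌊(φ i - φ i₀) / d⌋ ∈ Icc 0 ⌊D / d⌋ := fun i hi ↦ by
    have hnonneg : 0 ≤ φ i - φ i₀ := sub_nonneg.2 (hmin i hi)
    have hle : φ i - φ i₀ ≤ D := by
      rcases (hmin i hi).eq_or_lt with heq | hlt
      · rwa [heq, sub_self]
      · exact (hgap i₀ hi₀ i hi hlt).2
    exact mem_Icc.2 ⟨Int.floor_nonneg.2 (by positivity), Int.floor_le_floor (by gcongr)⟩
  have hinj : Set.InjOn (fun i ↦ ⌊(φ i - φ i₀) / d⌋) s := fun i hi j hj hij ↦ by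
    have hlt : |(φ i - φ i₀) / d - (φ j - φ i₀) / d| < 1 :=
      Int.abs_sub_lt_one_of_floor_eq_floor hij
    rw [← sub_div, sub_sub_sub_cancel_right, abs_div, abs_of_pos hd, div_lt_one hd, abs_lt] at hlt
    refine hφ hi hj (le_antisymm ?_ ?_) <;> by_contra! hne
    · linarith [(hgap j hj i hi hne).1]
    · linarith [(hgap i hi j hj hne).1]
  have hcard : (#s : ℤ) ≤ ⌊D / d⌋ + 1 := by
    have hle := card_le_card_of_injOn _ hmaps hinj
    have hfloor : 0 ≤ ⌊D / d⌋ := Int.floor_nonneg.2 (by positivity)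
    rw [Int.card_Icc] at hle
    omega
  calc (#s : ℝ) ≤ ⌊D / d⌋ + 1 := by exact_mod_cast hcard
    _ ≤ D / d + 1 := by gcongr; exact Int.floor_le _

/-- The pairs `(n, m)` of consecutive elements of `S` with `m - n ≤ L`; they carry the chords whose
slopes are counted. -/
noncomputable def shortGaps (S : Finset ℤ) (L : ℝ) : Finset (ℤ × ℤ) :=
  {p ∈ S ×ˢ S | p.1 < p.2 ∧ (p.2 : ℝ) ≤ p.1 + L ∧ ∀ k ∈ S, p.1 < k → p.2 ≤ k}

section ShortGaps

variable {S : Finset ℤ} {L : ℝ} {p r : ℤ × ℤ}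

theorem mem_shortGaps : p ∈ shortGaps S L ↔ (p.1 ∈ S ∧ p.2 ∈ S) ∧ p.1 < p.2 ∧
    (p.2 : ℝ) ≤ p.1 + L ∧ ∀ k ∈ S, p.1 < k → p.2 ≤ k := by
  rw [shortGaps, mem_filter, mem_product]

theorem snd_le_fst_of_mem_shortGaps (hp : p ∈ shortGaps S L) (hr : r ∈ shortGaps S L)
    (hlt : p.1 < r.1) : p.2 ≤ r.1 :=
  (mem_shortGaps.1 hp).2.2.2 r.1 (mem_shortGaps.1 hr).1.1 hlt

theorem fst_injOn_shortGaps (S : Finset ℤ) (L : ℝ) :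
    Set.InjOn Prod.fst (shortGaps S L : Set (ℤ × ℤ)) := by
  intro p hp r hr hfst
  obtain ⟨⟨-, hp₂⟩, hplt, -, hpmin⟩ := mem_shortGaps.1 hp
  obtain ⟨⟨-, hr₂⟩, hrlt, -, hrmin⟩ := mem_shortGaps.1 hr
  exact Prod.ext hfst (le_antisymm (hpmin _ hr₂ (hfst ▸ hrlt)) (hrmin _ hp₂ (hfst ▸ hplt)))

theorem exists_mem_shortGaps {n m : ℤ} (hn : n ∈ S) (hm : m ∈ S) (hnm : n < m)
    (hmL : (m : ℝ) ≤ n + L) : ∃ p ∈ shortGaps S L, p.1 = n := by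
  obtain ⟨k, hk, hkmin⟩ := exists_min_image {k ∈ S | n < k} id ⟨m, mem_filter.2 ⟨hm, hnm⟩⟩
  obtain ⟨hkS, hnk⟩ := mem_filter.1 hk
  have hkm : (k : ℝ) ≤ m := by exact_mod_cast hkmin m (mem_filter.2 ⟨hm, hnm⟩)
  exact ⟨(n, k), mem_shortGaps.2
    ⟨⟨hn, hkS⟩, hnk, hkm.trans hmL, fun j hj hnj ↦ hkmin j (mem_filter.2 ⟨hj, hnj⟩)⟩, rfl⟩

theorem card_le_card_shortGaps_add {D : ℝ} (hL : 0 < L) (hD : 0 ≤ D)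
    (hdiam : ∀ n ∈ S, ∀ m ∈ S, (m : ℝ) - n ≤ D) :
    (#S : ℝ) ≤ #(shortGaps S L) + (D / L + 1) := by
  set starts := (shortGaps S L).image Prod.fst
  have hsparse : (#(S \ starts) : ℝ) ≤ D / L + 1 := by
    refine card_le_div_add_one_of_separated hL hD Int.cast_injective.injOn fun n hn m hm hnm ↦ ?_
    obtain ⟨hnS, hn⟩ := mem_sdiff.1 hn
    obtain ⟨hmS, -⟩ := mem_sdiff.1 hm
    refine ⟨?_, hdiam n hnS m hmS⟩
    by_contra! hlt
    obtain ⟨p, hp, hpn⟩ :=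
      exists_mem_shortGaps (L := L) hnS hmS (by exact_mod_cast hnm) (by linarith)
    exact hn (mem_image.2 ⟨p, hp, hpn⟩)
  have hstarts_card : #starts = #(shortGaps S L) := card_image_of_injOn (fst_injOn_shortGaps S L)
  have hsplit : (#S : ℝ) ≤ #(S \ starts) + #(shortGaps S L) := by
    rw [← hstarts_card]
    exact_mod_cast card_le_card_sdiff_add_card
  linarith

end ShortGaps

/-! ### Lattice points near a curve -/

/-- The slope of the chord through the lattice points `(n, g n)` and `(m, g m)`, for `p = (n, m)`.
It is rational, so that chords can be sorted by the reduced denominator of their slope. -/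
def chordSlope (g : ℤ → ℤ) (p : ℤ × ℤ) : ℚ :=
  (g p.2 - g p.1 : ℚ) / (p.2 - p.1)

section ChordSlope

variable {g : ℤ → ℤ} {p : ℤ × ℤ}

theorem chordSlope_mul_sub (hp : p.1 < p.2) :
    (chordSlope g p : ℝ) * (p.2 - p.1) = g p.2 - g p.1 := by
  have hne : (p.2 : ℝ) - p.1 ≠ 0 := sub_ne_zero.2 (by exact_mod_cast hp.ne')
  simp only [chordSlope, Rat.cast_div, Rat.cast_sub, Rat.cast_intCast]
  exact div_mul_cancel₀ _ hne

theorem den_chordSlope_le_sub (hp : p.1 < p.2) :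
    ((chordSlope g p).den : ℝ) ≤ p.2 - p.1 := by
  have hdvd : ((chordSlope g p).den : ℤ) ∣ p.2 - p.1 := by
    have := Rat.den_dvd (g p.2 - g p.1) (p.2 - p.1)
    rwa [Rat.divInt_eq_div, Int.cast_sub, Int.cast_sub] at this
  exact_mod_cast Int.le_of_dvd (sub_pos.2 hp) hdvd

end ChordSlope

theorem card_rat_den_eq_le {T : Finset ℚ} {q : ℕ} {u v : ℝ} (huv : u ≤ v)
    (hden : ∀ s ∈ T, s.den = q) (hT : ∀ s ∈ T, (s : ℝ) ∈ Set.Icc (u / q) (v / q)) :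
    (#T : ℝ) ≤ v - u + 1 := by
  have hinj : Set.InjOn Rat.num T := fun s hs t ht hst ↦
    Rat.ext hst ((hden s hs).trans (hden t ht).symm)
  have hnum : ∀ s ∈ T, (s.num : ℝ) ∈ Set.Icc u v := fun s hs ↦ by
    have hq : (0 : ℝ) < q := by exact_mod_cast hden s hs ▸ s.den_pos
    have hsq : (s.num : ℝ) = s * q := by
      rw [← hden s hs]
      exact_mod_cast (Rat.mul_den_eq_num s).symm
    exact hsq ▸ ⟨(div_le_iff₀ hq).1 (hT s hs).1, (le_div_iff₀ hq).1 (hT s hs).2⟩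
  have hcast : Set.InjOn (fun s : ℚ ↦ (s.num : ℝ)) T := Int.cast_injective.comp_injOn hinj
  have hgap : ∀ s ∈ T, ∀ t ∈ T, (s.num : ℝ) < t.num →
      (t.num : ℝ) - s.num ∈ Set.Icc 1 (v - u) := fun s hs t ht hlt ↦ by
    have hstep : (s.num : ℝ) + 1 ≤ t.num := by exact_mod_cast hlt
    exact ⟨by linarith, sub_le_sub (hnum t ht).2 (hnum s hs).1⟩
  simpa using card_le_div_add_one_of_separated one_pos (sub_nonneg.2 huv) hcast hgap

theorem sum_inv_floor_le_one_add_log {x : ℝ} (hx : 1 ≤ x) :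
    ∑ k ∈ Icc 1 ⌊x⌋₊, (k : ℝ)⁻¹ ≤ 1 + Real.log x := by
  simpa [harmonic_eq_sum_Icc] using harmonic_floor_le_one_add_log x hx

section NearCurve

variable {f f' : ℝ → ℝ} {g : ℤ → ℤ} {a b lam δ L V : ℝ} {S : Finset ℤ}

theorem exists_abs_deriv_sub_chordSlope_le {p : ℤ × ℤ}
    (hf : ∀ x ∈ Set.Icc a b, HasDerivAt f (f' x) x)
    (hS : ∀ n ∈ S, (n : ℝ) ∈ Set.Icc a b) (hδ : ∀ n ∈ S, |f n - g n| ≤ δ)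
    (hp : p ∈ shortGaps S L) :
    ∃ ξ ∈ Set.Ioo (p.1 : ℝ) p.2, |f' ξ - chordSlope g p| ≤ 2 * δ / (chordSlope g p).den := by
  obtain ⟨⟨h₁, h₂⟩, hlt, -, -⟩ := mem_shortGaps.1 hp
  have hlt' : (p.1 : ℝ) < p.2 := by exact_mod_cast hlt
  have hderiv : ∀ x ∈ Set.Icc (p.1 : ℝ) p.2, HasDerivAt f (f' x) x := fun x hx ↦
    hf x (Set.Icc_subset_Icc (hS _ h₁).1 (hS _ h₂).2 hx)
  obtain ⟨ξ, hξ, hslope⟩ := exists_hasDerivAt_eq_slope f f' hlt'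
    (fun x hx ↦ (hderiv x hx).continuousAt.continuousWithinAt)
    (fun x hx ↦ hderiv x (Set.Ioo_subset_Icc_self hx))
  have hpos : (0 : ℝ) < p.2 - p.1 := sub_pos.2 hlt'
  have hdiff : f' ξ - chordSlope g p = ((f p.2 - g p.2) - (f p.1 - g p.1)) / (p.2 - p.1) := by
    rw [hslope, eq_div_iff hpos.ne', sub_mul, chordSlope_mul_sub hlt, div_mul_cancel₀ _ hpos.ne']
    ring
  have herror : |(f p.2 - g p.2) - (f p.1 - g p.1)| ≤ 2 * δ :=
    (abs_sub _ _).trans (by linarith [hδ _ h₁, hδ _ h₂])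
  have hδ0 : 0 ≤ δ := (abs_nonneg _).trans (hδ _ h₁)
  refine ⟨ξ, hξ, ?_⟩
  rw [hdiff, abs_div, abs_of_pos hpos]
  gcongr
  exact den_chordSlope_le_sub hlt

theorem fst_sub_fst_le_of_chordSlope_eq {p r : ℤ × ℤ} (hlam : 0 < lam)
    (hf : ∀ x ∈ Set.Icc a b, HasDerivAt f (f' x) x)
    (hmono : MonotoneOn (fun x ↦ f' x - lam * x) (Set.Icc a b))
    (hS : ∀ n ∈ S, (n : ℝ) ∈ Set.Icc a b) (hδ : ∀ n ∈ S, |f n - g n| ≤ δ)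
    (hp : p ∈ shortGaps S L) (hr : r ∈ shortGaps S L) (hlt : p.1 < r.1)
    (hslope : chordSlope g p = chordSlope g r) :
    (r.1 : ℝ) - p.1 ≤ 4 * δ / ((chordSlope g r).den * lam) + L := by
  obtain ⟨ξ, hξ, hξ'⟩ := exists_abs_deriv_sub_chordSlope_le hf hS hδ hp
  obtain ⟨η, hη, hη'⟩ := exists_abs_deriv_sub_chordSlope_le hf hS hδ hr
  obtain ⟨⟨hp₁, hp₂⟩, -, hpL, -⟩ := mem_shortGaps.1 hp
  obtain ⟨⟨hr₁, hr₂⟩, -, -, -⟩ := mem_shortGaps.1 hr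
  have hpr : (p.2 : ℝ) ≤ r.1 := by exact_mod_cast snd_le_fst_of_mem_shortGaps hp hr hlt
  have hgrowth : f' ξ - lam * ξ ≤ f' η - lam * η :=
    hmono ⟨(hS _ hp₁).1.trans hξ.1.le, hξ.2.le.trans (hS _ hp₂).2⟩
      ⟨(hS _ hr₁).1.trans hη.1.le, hη.2.le.trans (hS _ hr₂).2⟩ (by linarith [hξ.2, hη.1])
  have hξη : η - ξ ≤ 4 * δ / ((chordSlope g r).den * lam) := by
    rw [hslope] at hξ'
    rw [← div_div, le_div_iff₀ hlam, show 4 * δ = 2 * δ + 2 * δ by ring, add_div]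
    linarith [(abs_le.1 hξ').1, (abs_le.1 hη').2]
  linarith [hξ.2, hη.1]

theorem card_chordSlope_fiber_le (hlam : 0 < lam) (hδ0 : 0 ≤ δ) (hL : 0 ≤ L)
    (hf : ∀ x ∈ Set.Icc a b, HasDerivAt f (f' x) x)
    (hmono : MonotoneOn (fun x ↦ f' x - lam * x) (Set.Icc a b))
    (hS : ∀ n ∈ S, (n : ℝ) ∈ Set.Icc a b) (hδ : ∀ n ∈ S, |f n - g n| ≤ δ) (s : ℚ) :
    (#{p ∈ shortGaps S L | chordSlope g p = s} : ℝ) ≤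
      (4 * δ / (s.den * lam) + L) / s.den + 1 := by
  have hden : (0 : ℝ) < s.den := by exact_mod_cast s.den_pos
  have hfst : Set.InjOn (fun p : ℤ × ℤ ↦ (p.1 : ℝ))
      ({p ∈ shortGaps S L | chordSlope g p = s} : Finset (ℤ × ℤ)) :=
    Int.cast_injective.comp_injOn
      ((fst_injOn_shortGaps S L).mono (coe_subset.2 (filter_subset _ _)))
  refine card_le_div_add_one_of_separated hden (by positivity) hfst fun p hp r hr hlt ↦ ?_
  obtain ⟨hpG, hps⟩ := mem_filter.1 hp
  obtain ⟨hrG, rfl⟩ := mem_filter.1 hr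
  have hlt' : p.1 < r.1 := by exact_mod_cast hlt
  have hpr : (p.2 : ℝ) ≤ r.1 := by exact_mod_cast snd_le_fst_of_mem_shortGaps hpG hrG hlt'
  have hsep : ((chordSlope g p).den : ℝ) ≤ p.2 - p.1 :=
    den_chordSlope_le_sub (mem_shortGaps.1 hpG).2.1
  rw [hps] at hsep
  exact ⟨by linarith, fst_sub_fst_le_of_chordSlope_eq hlam hf hmono hS hδ hpG hrG hlt' hps⟩

theorem card_chordSlopes_den_eq_le (hlam : 0 ≤ lam) (hδ0 : 0 ≤ δ) (hab : a ≤ b)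
    (hf : ∀ x ∈ Set.Icc a b, HasDerivAt f (f' x) x)
    (hmono : MonotoneOn (fun x ↦ f' x - lam * x) (Set.Icc a b))
    (hS : ∀ n ∈ S, (n : ℝ) ∈ Set.Icc a b) (hδ : ∀ n ∈ S, |f n - g n| ≤ δ) (q : ℕ) :
    (#{s ∈ (shortGaps S L).image (chordSlope g) | s.den = q} : ℝ) ≤
      q * (f' b - f' a) + 4 * δ + 1 := by
  have hf'_mono : MonotoneOn f' (Set.Icc a b) := fun x hx y hy hxy ↦ by
    have := hmono hx hy hxy
    dsimp only at this
    nlinarith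
  have hf'ab : f' a ≤ f' b := hf'_mono ⟨le_rfl, hab⟩ ⟨hab, le_rfl⟩ hab
  have hslopes : ∀ s ∈ {s ∈ (shortGaps S L).image (chordSlope g) | s.den = q},
      (s : ℝ) ∈ Set.Icc ((q * f' a - 2 * δ) / q) ((q * f' b + 2 * δ) / q) := by
    simp only [mem_filter, mem_image, and_imp, forall_exists_index]
    rintro _ p hp rfl rfl
    obtain ⟨⟨h₁, h₂⟩, -, -, -⟩ := mem_shortGaps.1 hp
    obtain ⟨ξ, hξ, hnear⟩ := exists_abs_deriv_sub_chordSlope_le hf hS hδ hp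
    have hξab : ξ ∈ Set.Icc a b :=
      ⟨(hS _ h₁).1.trans hξ.1.le, hξ.2.le.trans (hS _ h₂).2⟩
    have hξa : f' a ≤ f' ξ := hf'_mono ⟨le_rfl, hab⟩ hξab hξab.1
    have hξb : f' ξ ≤ f' b := hf'_mono hξab ⟨hab, le_rfl⟩ hξab.2
    have hq : ((chordSlope g p).den : ℝ) ≠ 0 := by exact_mod_cast (chordSlope g p).den_ne_zero
    rw [sub_div, add_div, mul_div_cancel_left₀ _ hq, mul_div_cancel_left₀ _ hq]
    constructor <;> linarith [(abs_le.1 hnear).1, (abs_le.1 hnear).2]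
  have hqf' : q * f' a ≤ q * f' b := by gcongr
  calc _ ≤ (q * f' b + 2 * δ) - (q * f' a - 2 * δ) + 1 :=
        card_rat_den_eq_le (by linarith) (fun s hs ↦ (mem_filter.1 hs).2) hslopes
    _ = q * (f' b - f' a) + 4 * δ + 1 := by ring

theorem card_shortGaps_le (hlam : 0 < lam) (hδ0 : 0 ≤ δ) (hab : a ≤ b) (hL : 0 ≤ L)
    (hf : ∀ x ∈ Set.Icc a b, HasDerivAt f (f' x) x)
    (hmono : MonotoneOn (fun x ↦ f' x - lam * x) (Set.Icc a b))
    (hS : ∀ n ∈ S, (n : ℝ) ∈ Set.Icc a b) (hδ : ∀ n ∈ S, |f n - g n| ≤ δ) :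
    (#(shortGaps S L) : ℝ) ≤ ∑ q ∈ Icc 1 ⌊L⌋₊,
      (q * (f' b - f' a) + 4 * δ + 1) * ((4 * δ / (q * lam) + L) / q + 1) := by
  set slopes := (shortGaps S L).image (chordSlope g) with hslopes
  have hden : ∀ s ∈ slopes, s.den ∈ Icc 1 ⌊L⌋₊ := by
    rw [hslopes, forall_mem_image]
    intro p hp
    obtain ⟨-, hlt, hpL, -⟩ := mem_shortGaps.1 hp
    refine mem_Icc.2 ⟨(chordSlope g p).den_pos, Nat.le_floor ?_⟩
    linarith [den_chordSlope_le_sub (g := g) hlt]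
  calc (#(shortGaps S L) : ℝ)
      = ∑ s ∈ slopes, (#{p ∈ shortGaps S L | chordSlope g p = s} : ℝ) := by
        exact_mod_cast card_eq_sum_card_image (chordSlope g) (shortGaps S L)
    _ ≤ ∑ s ∈ slopes, ((4 * δ / (s.den * lam) + L) / s.den + 1) :=
        sum_le_sum fun s _ ↦ card_chordSlope_fiber_le hlam hδ0 hL hf hmono hS hδ s
    _ = ∑ q ∈ Icc 1 ⌊L⌋₊, ∑ s ∈ slopes with s.den = q,
          ((4 * δ / (s.den * lam) + L) / s.den + 1) := (sum_fiberwise_of_maps_to hden _).symm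
    _ = ∑ q ∈ Icc 1 ⌊L⌋₊, #{s ∈ slopes | s.den = q} * ((4 * δ / (q * lam) + L) / q + 1) :=
        sum_congr rfl fun q _ ↦ by
          rw [← nsmul_eq_mul, ← sum_const]
          exact sum_congr rfl fun s hs ↦ by rw [(mem_filter.1 hs).2]
    _ ≤ _ := by
        gcongr with q
        exact card_chordSlopes_den_eq_le hlam.le hδ0 hab hf hmono hS hδ q

theorem card_near_curve_le (hlam : 0 < lam) (hδ0 : 0 ≤ δ) (hδ1 : δ ≤ 1) (hab : a ≤ b)
    (hL : 1 ≤ L) (hV : 1 ≤ V) (hf'V : f' b - f' a ≤ V)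
    (hf : ∀ x ∈ Set.Icc a b, HasDerivAt f (f' x) x)
    (hmono : MonotoneOn (fun x ↦ f' x - lam * x) (Set.Icc a b))
    (hS : ∀ n ∈ S, (n : ℝ) ∈ Set.Icc a b) (hδ : ∀ n ∈ S, |f n - g n| ≤ δ) :
    (#S : ℝ) ≤ 24 * (V / lam) * δ * (1 + Real.log L) + 12 * V * L ^ 2 + ((b - a) / L + 1) := by
  have hL0 : 0 < L := one_pos.trans_le hL
  have hterm : ∀ q ∈ Icc 1 ⌊L⌋₊,
      (q * (f' b - f' a) + 4 * δ + 1) * ((4 * δ / (q * lam) + L) / q + 1) ≤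
        24 * (V / lam) * δ * (q : ℝ)⁻¹ + 12 * V * L := by
    intro q hq
    have hq1 : (1 : ℝ) ≤ q := by exact_mod_cast (mem_Icc.1 hq).1
    have hqL : (q : ℝ) ≤ L := (Nat.le_floor_iff hL0.le).1 (mem_Icc.1 hq).2
    have hslopes : q * (f' b - f' a) + 4 * δ + 1 ≤ 6 * V * q := by nlinarith
    have hfiber : (4 * δ / (q * lam) + L) / q + 1 ≤ (4 * δ / (q * lam) + 2 * L) / q := by
      rw [div_add_one (by positivity)]
      exact div_le_div_of_nonneg_right (by linarith) (by positivity)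
    calc _ ≤ 6 * V * q * ((4 * δ / (q * lam) + 2 * L) / q) := by gcongr
      _ = _ := by field_simp; ring
  have hshort : (#(shortGaps S L) : ℝ) ≤
      24 * (V / lam) * δ * (1 + Real.log L) + 12 * V * L ^ 2 := by
    calc _ ≤ ∑ q ∈ Icc 1 ⌊L⌋₊, (24 * (V / lam) * δ * (q : ℝ)⁻¹ + 12 * V * L) :=
          (card_shortGaps_le hlam hδ0 hab hL0.le hf hmono hS hδ).trans (sum_le_sum hterm)
      _ = 24 * (V / lam) * δ * ∑ q ∈ Icc 1 ⌊L⌋₊, (q : ℝ)⁻¹ + ⌊L⌋₊ * (12 * V * L) := by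
          rw [sum_add_distrib, ← mul_sum]
          simp
      _ ≤ 24 * (V / lam) * δ * (1 + Real.log L) + L * (12 * V * L) := by
          gcongr
          · exact sum_inv_floor_le_one_add_log hL
          · exact Nat.floor_le hL0.le
      _ = _ := by ring
  have hsplit := card_le_card_shortGaps_add hL0 (sub_nonneg.2 hab)
    fun n hn m hm ↦ sub_le_sub (hS m hm).2 (hS n hn).1
  linarith

end NearCurve

/-! ### Powers close to integers -/

theorem monotoneOn_deriv_rpow_sub_linear {c X : ℝ} (hc1 : 1 ≤ c) (hc2 : c ≤ 2) :
    MonotoneOn (fun x ↦ c * x ^ (c - 1) - c * (c - 1) * X ^ (c - 2) * x) (Set.Icc 1 X) := by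
  have hderiv : ∀ x ∈ Set.Icc 1 X,
      HasDerivAt (fun x ↦ c * x ^ (c - 1) - c * (c - 1) * X ^ (c - 2) * x)
        (c * ((c - 1) * x ^ (c - 1 - 1)) - c * (c - 1) * X ^ (c - 2) * 1) x := fun x hx ↦
    ((Real.hasDerivAt_rpow_const (.inl (by linarith [hx.1]))).const_mul c).sub
      ((hasDerivAt_id x).const_mul _)
  refine monotoneOn_of_hasDerivWithinAt_nonneg (convex_Icc 1 X)
    (fun x hx ↦ (hderiv x hx).continuousAt.continuousWithinAt)
    (fun x hx ↦ (hderiv x (interior_subset hx)).hasDerivWithinAt) fun x hx ↦ ?_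
  obtain ⟨hx1, hxX⟩ := interior_subset hx
  have hpow : X ^ (c - 2) ≤ x ^ (c - 2) :=
    Real.rpow_le_rpow_of_nonpos (by linarith) hxX (by linarith)
  have hcc : 0 ≤ c * (c - 1) := mul_nonneg (by linarith) (by linarith)
  rw [show c - 1 - 1 = c - 2 by ring]
  nlinarith [mul_le_mul_of_nonneg_left hpow hcc]

theorem card_rpow_near_int_le_of_gap {c X δ L : ℝ} (hc1 : 1 < c) (hc2 : c ≤ 2) (hX : 1 ≤ X)
    (hδ0 : 0 ≤ δ) (hδ1 : δ ≤ 1) (hL : 1 ≤ L) :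
    (#((Icc 1 ⌊X⌋₊).filter fun n : ℕ ↦ |(n : ℝ) ^ c - round ((n : ℝ) ^ c)| ≤ δ) : ℝ) ≤
      24 / (c - 1) * X * (1 + Real.log L) * δ + 24 * X ^ (c - 1) * L ^ 2 + (X / L + 1) := by
  have hX0 : 0 < X := by linarith
  have hc0 : 0 < c - 1 := by linarith
  set near := (Icc 1 ⌊X⌋₊).filter fun n : ℕ ↦ |(n : ℝ) ^ c - round ((n : ℝ) ^ c)| ≤ δ
  have hmem : ∀ n ∈ near, (n : ℝ) ∈ Set.Icc 1 X := fun n hn ↦ by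
    obtain ⟨hn1, hnX⟩ := mem_Icc.1 (mem_filter.1 hn).1
    exact ⟨by exact_mod_cast hn1, (Nat.le_floor_iff hX0.le).1 hnX⟩
  have hdist : ∀ n ∈ near, |(n : ℝ) ^ c - round ((n : ℝ) ^ c)| ≤ δ := fun n hn ↦
    (mem_filter.1 hn).2
  have hcount : (#(near.map Nat.castEmbedding) : ℝ) ≤
      24 * (c * X ^ (c - 1) / (c * (c - 1) * X ^ (c - 2))) * δ * (1 + Real.log L) +
        12 * (c * X ^ (c - 1)) * L ^ 2 + ((X - 1) / L + 1) :=
    card_near_curve_le (f := fun x ↦ x ^ c) (f' := fun x ↦ c * x ^ (c - 1))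
      (g := fun n ↦ round ((n : ℝ) ^ c)) (by positivity) hδ0 hδ1 hX hL
      (one_le_mul_of_one_le_of_one_le hc1.le (Real.one_le_rpow hX hc0.le))
      (sub_le_self _ (by positivity)) (fun x _ ↦ Real.hasDerivAt_rpow_const (.inr hc1.le))
      (monotoneOn_deriv_rpow_sub_linear hc1.le hc2)
      (forall_mem_map.2 fun n hn ↦ by simpa using hmem n hn)
      (forall_mem_map.2 fun n hn ↦ by simpa using hdist n hn)
  have hratio : c * X ^ (c - 1) / (c * (c - 1) * X ^ (c - 2)) = X / (c - 1) := by
    rw [show c - 1 = c - 2 + 1 by ring, Real.rpow_add_one hX0.ne']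
    field_simp
  rw [card_map, hratio] at hcount
  calc (#near : ℝ) ≤ 24 * (X / (c - 1)) * δ * (1 + Real.log L) +
        12 * (c * X ^ (c - 1)) * L ^ 2 + ((X - 1) / L + 1) := hcount
    _ ≤ 24 * (X / (c - 1)) * δ * (1 + Real.log L) +
        12 * (2 * X ^ (c - 1)) * L ^ 2 + (X / L + 1) := by gcongr; linarith
    _ = _ := by ring

theorem card_rpow_near_int_le {c X δ : ℝ} (hc1 : 1 < c) (hc2 : c ≤ 2) (hX : 1 ≤ X)
    (hδ0 : 0 ≤ δ) (hδ1 : δ ≤ 1) :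
    (#((Icc 1 ⌊X⌋₊).filter fun n : ℕ ↦ |(n : ℝ) ^ c - round ((n : ℝ) ^ c)| ≤ δ) : ℝ) ≤
      24 / (c - 1) * X * (1 + Real.log X) * δ + 26 * X ^ ((c + 1) / 3) := by
  have hX0 : 0 < X := by linarith
  set L := X ^ ((2 - c) / 3)
  have hL1 : 1 ≤ L := Real.one_le_rpow hX (by linarith)
  have hLX : L ≤ X := Real.rpow_le_self_of_one_le hX (by linarith)
  have hXL2 : X ^ (c - 1) * L ^ 2 = X ^ ((c + 1) / 3) := by
    rw [← Real.rpow_mul_natCast hX0.le, ← Real.rpow_add hX0]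
    ring_nf
  have hXL : X / L = X ^ ((c + 1) / 3) := by
    rw [← Real.rpow_one_sub' hX0.le (by linarith)]
    ring_nf
  have hone : 1 ≤ X ^ ((c + 1) / 3) := Real.one_le_rpow hX (by linarith)
  calc _ ≤ 24 / (c - 1) * X * (1 + Real.log L) * δ + 24 * X ^ (c - 1) * L ^ 2 + (X / L + 1) :=
        card_rpow_near_int_le_of_gap hc1 hc2 hX hδ0 hδ1 hL1
    _ ≤ 24 / (c - 1) * X * (1 + Real.log X) * δ + 24 * X ^ (c - 1) * L ^ 2 + (X / L + 1) := by
        gcongr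
    _ ≤ _ := by
        rw [mul_assoc 24, hXL2, hXL]
        linarith

/-! ### From counting to the sum -/

-- With `y = M / max 1 (M t)`, every `k ≤ y` satisfies `t ≤ 1 / k`, and `y / 2 < ⌊y⌋`.
theorem inv_max_one_mul_le_card {M t : ℝ} (hM : 1 ≤ M) (ht : t ≤ 1) :
    (max 1 (M * t))⁻¹ ≤ 2 / M * #((Icc 1 ⌊M⌋₊).filter fun k : ℕ ↦ t ≤ (k : ℝ)⁻¹) := by
  have hM0 : 0 < M := by linarith
  have hmax : 0 < max 1 (M * t) := by positivity
  set y := M / max 1 (M * t) with hy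
  have hy1 : 1 ≤ y := (one_le_div hmax).2 (max_le hM (mul_le_of_le_one_right hM0.le ht))
  have hyM : y ≤ M := div_le_self hM0.le (le_max_left _ _)
  have hty : t ≤ y⁻¹ := by
    rw [hy, inv_div, le_div_iff₀ hM0, mul_comm]
    exact le_max_right _ _
  have hsub : Icc 1 ⌊y⌋₊ ⊆ (Icc 1 ⌊M⌋₊).filter fun k : ℕ ↦ t ≤ (k : ℝ)⁻¹ := fun k hk ↦ by
    obtain ⟨hk1, hky⟩ := mem_Icc.1 hk
    have hky' : (k : ℝ) ≤ y := (Nat.le_floor_iff (by linarith)).1 hky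
    exact mem_filter.2 ⟨mem_Icc.2 ⟨hk1, hky.trans (Nat.floor_le_floor hyM)⟩,
      hty.trans (by gcongr)⟩
  have hcard : (⌊y⌋₊ : ℝ) ≤ #((Icc 1 ⌊M⌋₊).filter fun k : ℕ ↦ t ≤ (k : ℝ)⁻¹) := by
    simpa using card_le_card hsub
  calc (max 1 (M * t))⁻¹ = 2 / M * (y / 2) := by rw [hy]; field_simp
    _ ≤ 2 / M * #((Icc 1 ⌊M⌋₊).filter fun k : ℕ ↦ t ≤ (k : ℝ)⁻¹) := by
        gcongr
        exact (Nat.div_two_lt_floor hy1).le.trans hcard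

theorem sum_inv_max_one_mul_le_of_card_le {ι : Type*} {s : Finset ι} {t : ι → ℝ} {M A B : ℝ}
    (hM : 1 ≤ M) (hA : 0 ≤ A) (hB : 0 ≤ B) (ht : ∀ i ∈ s, t i ≤ 1)
    (hcard : ∀ δ, 0 ≤ δ → δ ≤ 1 → (#{i ∈ s | t i ≤ δ} : ℝ) ≤ A * δ + B) :
    ∑ i ∈ s, (max 1 (M * t i))⁻¹ ≤ 2 * A * (1 + Real.log M) / M + 2 * B := by
  have hM0 : 0 < M := by linarith
  calc ∑ i ∈ s, (max 1 (M * t i))⁻¹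
      ≤ ∑ i ∈ s, 2 / M * #((Icc 1 ⌊M⌋₊).filter fun k : ℕ ↦ t i ≤ (k : ℝ)⁻¹) :=
        sum_le_sum fun i hi ↦ inv_max_one_mul_le_card hM (ht i hi)
    _ = 2 / M * ∑ k ∈ Icc 1 ⌊M⌋₊, (#{i ∈ s | t i ≤ (k : ℝ)⁻¹} : ℝ) := by
        rw [← mul_sum]
        congr 1
        exact_mod_cast sum_card_bipartiteAbove_eq_sum_card_bipartiteBelow
          (fun i (k : ℕ) ↦ t i ≤ (k : ℝ)⁻¹)
    _ ≤ 2 / M * ∑ k ∈ Icc 1 ⌊M⌋₊, (A * (k : ℝ)⁻¹ + B) := by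
        gcongr with k hk
        have hk1 : (1 : ℝ) ≤ k := by exact_mod_cast (mem_Icc.1 hk).1
        exact hcard _ (by positivity) (inv_le_one_of_one_le₀ hk1)
    _ = 2 / M * (A * ∑ k ∈ Icc 1 ⌊M⌋₊, (k : ℝ)⁻¹ + ⌊M⌋₊ * B) := by
        rw [sum_add_distrib, ← mul_sum]
        simp
    _ ≤ 2 / M * (A * (1 + Real.log M) + M * B) := by
        gcongr
        · exact sum_inv_floor_le_one_add_log hM
        · exact Nat.floor_le hM0.le
    _ = _ := by field_simp

theorem one_add_log_sq_le {ε X : ℝ} (hε : 0 < ε) (hX : 1 ≤ X) :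
    (1 + Real.log X) ^ 2 ≤ (1 + 2 / ε) ^ 2 * X ^ ε := by
  have hX0 : 0 ≤ X := by linarith
  have hlog0 : 0 ≤ Real.log X := Real.log_nonneg hX
  have hlog : Real.log X ≤ X ^ (ε / 2) / (ε / 2) := Real.log_le_rpow_div hX0 (half_pos hε)
  have hone : 1 ≤ X ^ (ε / 2) := Real.one_le_rpow hX (half_pos hε).le
  calc (1 + Real.log X) ^ 2 ≤ (X ^ (ε / 2) + X ^ (ε / 2) / (ε / 2)) ^ 2 := by gcongr
    _ = (1 + 2 / ε) ^ 2 * (X ^ (ε / 2)) ^ 2 := by field_simp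
    _ = (1 + 2 / ε) ^ 2 * X ^ ε := by
        rw [← Real.rpow_mul_natCast hX0]
        norm_num

-- The two terms on the right are equal at `M = X ^ ((2 - c) / 3)`.
theorem rpow_le_div_add_sqrt_mul_rpow {c X M : ℝ} (hX : 0 < X) (hM : 0 < M) :
    X ^ ((c + 1) / 3) ≤ X * M⁻¹ + M ^ ((1 : ℝ) / 2) * X ^ (c / 2) := by
  rcases le_total M (X ^ ((2 - c) / 3)) with hle | hge
  · have hfirst : X ^ ((c + 1) / 3) ≤ X * M⁻¹ := by
      rw [← div_eq_mul_inv, le_div_iff₀ hM]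
      calc X ^ ((c + 1) / 3) * M ≤ X ^ ((c + 1) / 3) * X ^ ((2 - c) / 3) := by gcongr
        _ = X := by
          rw [← Real.rpow_add hX, show (c + 1) / 3 + (2 - c) / 3 = 1 by ring, Real.rpow_one]
    exact hfirst.trans (le_add_of_nonneg_right (by positivity))
  · have hsecond : X ^ ((c + 1) / 3) ≤ M ^ ((1 : ℝ) / 2) * X ^ (c / 2) := by
      calc X ^ ((c + 1) / 3) = (X ^ ((2 - c) / 3)) ^ ((1 : ℝ) / 2) * X ^ (c / 2) := by
            rw [← Real.rpow_mul hX.le, ← Real.rpow_add hX]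
            ring_nf
        _ ≤ M ^ ((1 : ℝ) / 2) * X ^ (c / 2) := by gcongr
    exact hsecond.trans (le_add_of_nonneg_left (by positivity))

theorem self_le_sqrt_mul_rpow {c X M : ℝ} (hX : 1 ≤ X) (hM : 1 ≤ M) (hc : 1 ≤ c)
    (h : 2 ≤ c ∨ X ≤ M) : X ≤ M ^ ((1 : ℝ) / 2) * X ^ (c / 2) := by
  rcases h with hc2 | hXM
  · calc X ≤ X ^ (c / 2) := Real.self_le_rpow_of_one_le hX (by linarith)
      _ ≤ M ^ ((1 : ℝ) / 2) * X ^ (c / 2) :=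
        le_mul_of_one_le_left (by positivity) (Real.one_le_rpow hM (by norm_num))
  · calc X = X ^ ((1 : ℝ) / 2) * X ^ ((1 : ℝ) / 2) := by
          rw [← Real.rpow_add (by linarith), add_halves, Real.rpow_one]
      _ ≤ M ^ ((1 : ℝ) / 2) * X ^ (c / 2) := by gcongr

theorem sum_inv_max_rpow_near_int_le_self {c X M : ℝ} (hX : 0 ≤ X) :
    ∑ n ∈ Icc 1 ⌊X⌋₊, (max 1 (M * |(n : ℝ) ^ c - round ((n : ℝ) ^ c)|))⁻¹ ≤ X := by
  calc _ ≤ ∑ _n ∈ Icc 1 ⌊X⌋₊, (1 : ℝ) :=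
        sum_le_sum fun _ _ ↦ inv_le_one_of_one_le₀ (le_max_left _ _)
    _ = ⌊X⌋₊ := by simp
    _ ≤ X := Nat.floor_le hX

theorem sum_inv_max_rpow_near_int_le {c X M : ℝ} (hc1 : 1 < c) (hc2 : c ≤ 2) (hM : 1 ≤ M)
    (hMX : M ≤ X) :
    ∑ n ∈ Icc 1 ⌊X⌋₊, (max 1 (M * |(n : ℝ) ^ c - round ((n : ℝ) ^ c)|))⁻¹ ≤
      48 / (c - 1) * (1 + Real.log X) ^ 2 * (X * M⁻¹) + 52 * X ^ ((c + 1) / 3) := by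
  have hX : 1 ≤ X := hM.trans hMX
  have hlog : 0 ≤ Real.log X := Real.log_nonneg hX
  have hdist (n : ℕ) : |(n : ℝ) ^ c - round ((n : ℝ) ^ c)| ≤ 1 :=
    (abs_sub_round _).trans (by norm_num)
  calc _ ≤ 2 * (24 / (c - 1) * X * (1 + Real.log X)) * (1 + Real.log M) / M +
        2 * (26 * X ^ ((c + 1) / 3)) :=
        sum_inv_max_one_mul_le_of_card_le hM (by positivity) (by positivity) (fun n _ ↦ hdist n)
          fun δ hδ0 hδ1 ↦ card_rpow_near_int_le hc1 hc2 hX hδ0 hδ1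
    _ ≤ 2 * (24 / (c - 1) * X * (1 + Real.log X)) * (1 + Real.log X) / M +
        2 * (26 * X ^ ((c + 1) / 3)) := by gcongr
    _ = _ := by ring

/-- The summand `(max 1 (M t))⁻¹` is `min 1 (1 / (M t))` with the value `1` at `t = 0`, where the
latter is `0` because `1 / 0 = 0`. -/
theorem stmt_12_general (c ε : ℝ) (hc : 1 < c) (hε : 0 < ε) :
    ∃ C : ℝ, 0 < C ∧ ∀ X : ℝ, 1 ≤ X → ∀ M : ℝ, 1 ≤ M →
      ∑ n ∈ Icc 1 ⌊X⌋₊, (max 1 (M * |(n : ℝ) ^ c - round ((n : ℝ) ^ c)|))⁻¹ ≤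
        C * X ^ ε * (X * M⁻¹ + M ^ ((1 : ℝ) / 2) * X ^ (c / 2)) := by
  refine ⟨48 / (c - 1) * (1 + 2 / ε) ^ 2 + 52, by positivity, fun X hX M hM ↦ ?_⟩
  set R := X * M⁻¹ + M ^ ((1 : ℝ) / 2) * X ^ (c / 2)
  have hXε : 1 ≤ X ^ ε := Real.one_le_rpow hX hε.le
  have hXM : X * M⁻¹ ≤ R := le_add_of_nonneg_right (by positivity)
  have hR : 0 ≤ R := by positivity
  by_cases htrivial : 2 ≤ c ∨ X ≤ M
  · calc _ ≤ X := sum_inv_max_rpow_near_int_le_self (by linarith)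
      _ ≤ M ^ ((1 : ℝ) / 2) * X ^ (c / 2) := self_le_sqrt_mul_rpow hX hM hc.le htrivial
      _ ≤ R := le_add_of_nonneg_left (by positivity)
      _ ≤ _ := le_mul_of_one_le_left hR (one_le_mul_of_one_le_of_one_le
        (le_add_of_nonneg_of_le (by positivity) (by norm_num)) hXε)
  · push Not at htrivial
    calc _ ≤ 48 / (c - 1) * (1 + Real.log X) ^ 2 * (X * M⁻¹) + 52 * X ^ ((c + 1) / 3) :=
          sum_inv_max_rpow_near_int_le hc htrivial.1.le hM htrivial.2.le
      _ ≤ 48 / (c - 1) * ((1 + 2 / ε) ^ 2 * X ^ ε) * R + 52 * (X ^ ε * R) := by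
          gcongr
          · exact one_add_log_sq_le hε hX
          · exact (rpow_le_div_add_sqrt_mul_rpow (by linarith) (by linarith)).trans
              (le_mul_of_one_le_left hR hXε)
      _ = _ := by ring

theorem min_one_one_div_le_inv_max_one (y : ℝ) : min 1 (1 / y) ≤ (max 1 y)⁻¹ := by
  rcases le_total y 1 with h | h
  · simp [max_eq_left h]
  · simp [max_eq_right h]

theorem sum_min_le_sum_inv_max {X y M : ℝ} {t : ℕ → ℝ} (hy : 0 ≤ y) :
    ∑ n ∈ (range (⌊X⌋₊ + 1)).filter (fun n : ℕ ↦ y < n), min 1 (1 / (M * t n)) ≤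
      ∑ n ∈ Icc 1 ⌊X⌋₊, (max 1 (M * t n))⁻¹ := by
  have hsub : (range (⌊X⌋₊ + 1)).filter (fun n : ℕ ↦ y < n) ⊆ Icc 1 ⌊X⌋₊ := fun n hn ↦ by
    obtain ⟨hnX, hyn⟩ := mem_filter.1 hn
    exact mem_Icc.2 ⟨by exact_mod_cast hy.trans_lt hyn, Nat.lt_succ_iff.1 (mem_range.1 hnX)⟩
  exact (sum_le_sum fun _ _ ↦ min_one_one_div_le_inv_max_one _).trans
    (sum_le_sum_of_subset_of_nonneg hsub fun _ _ _ ↦ by positivity)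

theorem stmt_12 (c μ ε : ℝ) (hc1 : 1 < c) (hc2 : c < 2) (hμ1 : 0 < μ) (hμ2 : μ < 1)
    (hε : 0 < ε) :
    ∃ C : ℝ, 0 < C ∧
      ∀ X : ℝ, 3 ≤ X → ∀ M : ℕ, 3 ≤ M → (M : ℝ) ≤ X →
        (∑ n ∈ (Finset.range (⌊X⌋₊ + 1)).filter (fun n : ℕ => μ * X < (n : ℝ)),
            min 1 (1 / (M * |(n : ℝ) ^ c - round ((n : ℝ) ^ c)|))) ≤
          C * X ^ ε * (X * (M : ℝ)⁻¹ + (M : ℝ) ^ ((1 : ℝ) / 2) * X ^ (c / 2)) := by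
  obtain ⟨C, hC, hbound⟩ := stmt_12_general c ε hc1 hε
  exact ⟨C, hC, fun X hX M hM _ ↦
    (sum_min_le_sum_inv_max (by positivity)).trans
      (hbound X (by linarith) M (by exact_mod_cast (by omega : 1 ≤ M)))⟩
end

section
/- Let $c$ and $\mu$ be fixed real numbers with $1 < c < 2$ and $0 < \mu < 1$. There exists a constant $C = C(c, \mu) > 0$ such that for every real $X \geq 1$ and every integer $k \geq 1$, one has $\left| \sum_{\mu X < n \leq X} e(k n^c) \right| \leq C \left( k^{\frac{1}{2}} X^{\frac{c}{2}} + k^{-\frac{1}{2}} X^{1 - \frac{c}{2}} \right)$, where the sum is over integers $n$. -/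
/-- `e(t) = e^{2πit}`. -/
noncomputable def e (t : ℝ) : ℂ := Complex.exp (2 * Real.pi * Complex.I * t)

/-!
The proof is van der Corput's second derivative test for `F x = k x ^ c`, where `c ≠ 0, 1`.

Kusmin–Landau: if the differences `d n = f (n + 1) - f n` increase and keep a distance `δ` from the
integers, staying between two consecutive ones, then `e (f n) = g n * (e (f (n + 1)) - e (f n))`
with `g n = 1 / (e (d n) - 1) = -1/2 - (i/2) cot (π d n)`. Summation by parts bounds the sum of the
`e (f n)` by `1 / δ`, since the variation of `g` telescopes by monotonicity of the cotangent.

If `d` merely grows with slope at least `l` and total variation at most `V`, cut the range according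
to the integer `m = ⌊d n + δ⌋`, which takes at most `V + 2` values. For each `m`, at most
`2 δ / l + 1` terms have `d n` within `δ` of `m`, and Kusmin–Landau applies to the others. With
`l ≤ F'' ≤ u` on `[a, b]` and `δ = √l` this yields `4 (u (b - a) + 2) / √l` if `l ≤ 1`; if `l > 1`
that bound is weaker than the trivial one. On `[μ X, 2 X]` the second derivative of `k x ^ c` has
constant sign, positive after conjugating the sum, and order of magnitude `|k| X ^ (c - 2)`.
-/

open Finset Real
open scoped fwdDiff FourierTransform

/-! ### The exponential and its distance to `1` -/

lemma e_eq_fourierChar (t : ℝ) : e t = 𝐞 t := by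
  rw [e, Real.fourierChar_apply]
  congr 1
  push_cast
  ring

lemma norm_e (t : ℝ) : ‖e t‖ = 1 := by
  rw [e_eq_fourierChar, Circle.norm_coe]

lemma e_add (s t : ℝ) : e (s + t) = e s * e t := by
  simp only [e_eq_fourierChar, AddChar.map_add_eq_mul, Circle.coe_mul]

lemma e_neg (t : ℝ) : e (-t) = starRingEnd ℂ (e t) := by
  simp only [e_eq_fourierChar, AddChar.map_neg_eq_inv, Circle.coe_inv_eq_conj]

lemma e_sub_intCast (t : ℝ) (m : ℤ) : e (t - m) = e t := by
  rw [e, e, Complex.exp_eq_exp_iff_exists_int]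
  exact ⟨-m, by push_cast; ring⟩

lemma norm_sum_e_le_card {ι : Type*} (f : ι → ℝ) (S : Finset ι) : ‖∑ n ∈ S, e (f n)‖ ≤ #S := by
  simpa [norm_e] using norm_sum_le S fun n => e (f n)

lemma norm_sum_e_neg {ι : Type*} (f : ι → ℝ) (S : Finset ι) :
    ‖∑ n ∈ S, e (-f n)‖ = ‖∑ n ∈ S, e (f n)‖ := by
  simp only [e_neg, ← map_sum, RCLike.norm_conj]

lemma e_half (t : ℝ) : e (t / 2) = cos (π * t) + sin (π * t) * Complex.I := by
  rw [Complex.ofReal_cos, Complex.ofReal_sin, ← Complex.exp_mul_I, e]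
  congr 1
  push_cast
  ring

lemma e_sub_one (t : ℝ) : e t - 1 = 2 * sin (π * t) * Complex.I * e (t / 2) := by
  have hcs : (cos (π * t) : ℂ) ^ 2 + (sin (π * t) : ℂ) ^ 2 = 1 := by
    exact_mod_cast cos_sq_add_sin_sq (π * t)
  rw [← add_halves t, e_add, add_halves, e_half]
  linear_combination hcs - (sin (π * t) : ℂ) ^ 2 * Complex.I_sq

lemma norm_e_sub_one (t : ℝ) : ‖e t - 1‖ = 2 * |sin (π * t)| := by
  simp only [e_sub_one, norm_mul, norm_e, Complex.norm_I, Complex.norm_real, Complex.norm_ofNat,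
    Real.norm_eq_abs, mul_one]

lemma inv_e_sub_one {t : ℝ} (ht : sin (π * t) ≠ 0) :
    (e t - 1)⁻¹ = -1 / 2 - (cot (π * t) / 2 : ℝ) * Complex.I := by
  have hs : (sin (π * t) : ℂ) ≠ 0 := by exact_mod_cast ht
  have hcs : (cos (π * t) : ℂ) ^ 2 + (sin (π * t) : ℂ) ^ 2 = 1 := by
    exact_mod_cast cos_sq_add_sin_sq (π * t)
  apply inv_eq_of_mul_eq_one_right
  rw [e_sub_one, e_half, cot_eq_cos_div_sin]
  simp only [Complex.ofReal_div, Complex.ofReal_ofNat]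
  generalize (cos (π * t) : ℂ) = x at *
  generalize (sin (π * t) : ℂ) = y at *
  field_simp
  linear_combination hcs - (x ^ 2 + y ^ 2 + Complex.I * x * y) * Complex.I_sq

lemma pi_mul_mem_Ioo {t : ℝ} (ht : t ∈ Set.Ioo 0 1) : π * t ∈ Set.Ioo 0 π :=
  ⟨mul_pos pi_pos ht.1, mul_lt_of_lt_one_right pi_pos ht.2⟩

lemma sin_pi_mul_pos {t : ℝ} (ht : t ∈ Set.Ioo 0 1) : 0 < sin (π * t) :=
  sin_pos_of_mem_Ioo (pi_mul_mem_Ioo ht)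

lemma two_mul_le_sin_pi_mul {δ t : ℝ} (hδ : 0 ≤ δ) (ht : t ∈ Set.Icc δ (1 - δ)) :
    2 * δ ≤ sin (π * t) := by
  obtain ⟨hδt, htδ⟩ := ht
  have two_mul_le {s : ℝ} (h0 : 0 ≤ s) (h1 : s ≤ 1 / 2) : 2 * s ≤ sin (π * s) := by
    have := mul_le_sin (x := π * s) (by positivity) (by nlinarith [pi_pos])
    rwa [show 2 / π * (π * s) = 2 * s by field_simp] at this
  rcases le_total t (1 / 2) with ht | ht
  · linarith [two_mul_le (hδ.trans hδt) ht]
  · have hsymm : sin (π * (1 - t)) = sin (π * t) := by rw [mul_one_sub, sin_pi_sub]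
    linarith [two_mul_le (s := 1 - t) (by linarith) (by linarith)]

lemma norm_inv_e_sub_one_le {δ t : ℝ} (hδ : 0 < δ) (ht : t ∈ Set.Icc δ (1 - δ)) :
    ‖(e t - 1)⁻¹‖ ≤ 1 / (4 * δ) := by
  rw [norm_inv, ← one_div, norm_e_sub_one]
  apply one_div_le_one_div_of_le (by positivity)
  linarith [two_mul_le_sin_pi_mul hδ.le ht, le_abs_self (sin (π * t))]

lemma cot_antitoneOn : AntitoneOn cot (Set.Ioo 0 π) := by
  intro x ⟨hx0, hxπ⟩ y ⟨hy0, hyπ⟩ hxy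
  rw [cot_eq_cos_div_sin, cot_eq_cos_div_sin,
    div_le_div_iff₀ (sin_pos_of_pos_of_lt_pi hy0 hyπ) (sin_pos_of_pos_of_lt_pi hx0 hxπ)]
  have := sin_nonneg_of_nonneg_of_le_pi (x := y - x) (by linarith) (by linarith)
  rw [sin_sub] at this
  linarith

lemma norm_inv_e_sub_one_sub {s t : ℝ} (hs : s ∈ Set.Ioo 0 1) (ht : t ∈ Set.Ioo 0 1)
    (hst : s ≤ t) :
    ‖(e t - 1)⁻¹ - (e s - 1)⁻¹‖ = cot (π * s) / 2 - cot (π * t) / 2 := by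
  have hcot : cot (π * t) ≤ cot (π * s) :=
    cot_antitoneOn (pi_mul_mem_Ioo hs) (pi_mul_mem_Ioo ht) (by gcongr)
  have hdiff : (e t - 1)⁻¹ - (e s - 1)⁻¹ =
      (cot (π * s) / 2 - cot (π * t) / 2 : ℝ) * Complex.I := by
    rw [inv_e_sub_one (sin_pi_mul_pos ht).ne', inv_e_sub_one (sin_pi_mul_pos hs).ne',
      Complex.ofReal_sub]
    ring
  rw [hdiff, norm_mul, Complex.norm_I, mul_one, Complex.norm_real, norm_of_nonneg (by linarith)]

lemma abs_cot_div_two_le_norm_inv_e_sub_one {t : ℝ} (ht : t ∈ Set.Ioo 0 1) :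
    |cot (π * t) / 2| ≤ ‖(e t - 1)⁻¹‖ := by
  have him : ((e t - 1)⁻¹).im = -(cot (π * t) / 2) := by
    rw [inv_e_sub_one (sin_pi_mul_pos ht).ne', Complex.sub_im, Complex.im_ofReal_mul, Complex.I_im]
    norm_num
  rw [← abs_neg, ← him]
  exact Complex.abs_im_le_norm _

/-! ### The Kusmin–Landau inequality -/

lemma sum_Icc_mul_fwdDiff {R : Type*} [CommRing R] (g u : ℕ → R) {a b : ℕ} (hab : a ≤ b) :
    ∑ n ∈ Icc a b, g n * Δ_[1] u n =
      g b * u (b + 1) - g a * u a - ∑ n ∈ Ico a b, Δ_[1] g n * u (n + 1) := by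
  induction b, hab using Nat.le_induction with
  | base => simp [fwdDiff, mul_sub]
  | succ b hab ih =>
    rw [sum_Icc_succ_top (by lia), sum_Ico_succ_top hab, ih]
    simp only [fwdDiff]
    ring

lemma norm_sum_Icc_mul_fwdDiff_le {R : Type*} [NormedCommRing R] (g u : ℕ → R)
    (hu : ∀ n, ‖u n‖ ≤ 1) {a b : ℕ} (hab : a ≤ b) :
    ‖∑ n ∈ Icc a b, g n * Δ_[1] u n‖ ≤ ‖g b‖ + ‖g a‖ + ∑ n ∈ Ico a b, ‖Δ_[1] g n‖ := by
  have norm_mul_u_le (x : R) (n : ℕ) : ‖x * u n‖ ≤ ‖x‖ :=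
    (norm_mul_le _ _).trans (mul_le_of_le_one_right (norm_nonneg x) (hu n))
  rw [sum_Icc_mul_fwdDiff g u hab]
  calc _ ≤ ‖g b * u (b + 1)‖ + ‖g a * u a‖ + ‖∑ n ∈ Ico a b, Δ_[1] g n * u (n + 1)‖ :=
        (norm_sub_le _ _).trans (by gcongr; exact norm_sub_le _ _)
    _ ≤ _ := by
        gcongr
        exacts [norm_mul_u_le _ _, norm_mul_u_le _ _,
          norm_sum_le_of_le _ fun n _ => norm_mul_u_le _ _]

lemma e_eq_inv_mul_fwdDiff {f : ℕ → ℝ} {n : ℕ} {m : ℤ} (hn : Δ_[1] f n - m ∈ Set.Ioo (0 : ℝ) 1) :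
    e (f n) = (e (Δ_[1] f n - m) - 1)⁻¹ * Δ_[1] (fun n => e (f n)) n := by
  have hne : e (Δ_[1] f n - m) - 1 ≠ 0 := by
    rw [← norm_pos_iff, norm_e_sub_one]
    have := sin_pi_mul_pos hn
    positivity
  have hstep : e (f (n + 1)) = e (Δ_[1] f n - m) * e (f n) := by
    rw [e_sub_intCast, ← e_add, fwdDiff, sub_add_cancel]
  rw [eq_inv_mul_iff_mul_eq₀ hne, sub_one_mul, ← hstep, fwdDiff]

lemma sum_norm_fwdDiff_inv_e_sub_one {θ : ℕ → ℝ} {a b : ℕ} (hab : a ≤ b)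
    (hmono : MonotoneOn θ (Icc a b)) (hθ : ∀ n ∈ Icc a b, θ n ∈ Set.Ioo 0 1) :
    ∑ n ∈ Ico a b, ‖Δ_[1] (fun n => (e (θ n) - 1)⁻¹) n‖ =
      cot (π * θ a) / 2 - cot (π * θ b) / 2 := by
  have hterm (n : ℕ) (hn : n ∈ Ico a b) : ‖Δ_[1] (fun n => (e (θ n) - 1)⁻¹) n‖ =
      -(cot (π * θ (n + 1)) / 2 - cot (π * θ n) / 2) := by
    obtain ⟨han, hnb⟩ := mem_Ico.1 hn
    have hn₀ : n ∈ Icc a b := mem_Icc.2 ⟨han, hnb.le⟩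
    have hn₁ : n + 1 ∈ Icc a b := mem_Icc.2 ⟨by lia, hnb⟩
    rw [neg_sub]
    exact norm_inv_e_sub_one_sub (hθ _ hn₀) (hθ _ hn₁) (hmono hn₀ hn₁ n.le_succ)
  rw [sum_congr rfl hterm, sum_neg_distrib, sum_Ico_sub (fun n => cot (π * θ n) / 2) hab, neg_sub]

lemma norm_sum_Icc_e_le {f : ℕ → ℝ} {a b : ℕ} (hab : a ≤ b) {δ : ℝ} (hδ : 0 < δ) {m : ℤ}
    (hmono : MonotoneOn (Δ_[1] f) (Icc a b))
    (hf : ∀ n ∈ Icc a b, Δ_[1] f n ∈ Set.Icc (m + δ) (m + 1 - δ)) :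
    ‖∑ n ∈ Icc a b, e (f n)‖ ≤ 1 / δ := by
  set θ : ℕ → ℝ := fun n => Δ_[1] f n - m
  set g : ℕ → ℂ := fun n => (e (θ n) - 1)⁻¹
  have hθ (n : ℕ) (hn : n ∈ Icc a b) : θ n ∈ Set.Icc δ (1 - δ) :=
    ⟨by linarith [(hf n hn).1], by linarith [(hf n hn).2]⟩
  have hθ₀₁ (n : ℕ) (hn : n ∈ Icc a b) : θ n ∈ Set.Ioo 0 1 :=
    ⟨by linarith [(hθ n hn).1], by linarith [(hθ n hn).2]⟩
  have variation : ∑ n ∈ Ico a b, ‖Δ_[1] g n‖ = cot (π * θ a) / 2 - cot (π * θ b) / 2 :=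
    sum_norm_fwdDiff_inv_e_sub_one hab
      (fun x hx y hy hxy => sub_le_sub_right (hmono hx hy hxy) _) hθ₀₁
  have ha : a ∈ Icc a b := left_mem_Icc.2 hab
  have hb : b ∈ Icc a b := right_mem_Icc.2 hab
  calc ‖∑ n ∈ Icc a b, e (f n)‖
      = ‖∑ n ∈ Icc a b, g n * Δ_[1] (fun n => e (f n)) n‖ := by
        rw [sum_congr rfl fun n hn => e_eq_inv_mul_fwdDiff (hθ₀₁ n hn)]
    _ ≤ ‖g b‖ + ‖g a‖ + (cot (π * θ a) / 2 - cot (π * θ b) / 2) :=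
        variation ▸ norm_sum_Icc_mul_fwdDiff_le g _ (fun n => (norm_e _).le) hab
    _ ≤ 4 * (1 / (4 * δ)) := by
        linarith [norm_inv_e_sub_one_le hδ (hθ a ha), norm_inv_e_sub_one_le hδ (hθ b hb),
          (abs_le.1 (abs_cot_div_two_le_norm_inv_e_sub_one (hθ₀₁ a ha))).2,
          (abs_le.1 (abs_cot_div_two_le_norm_inv_e_sub_one (hθ₀₁ b hb))).1]
    _ = 1 / δ := by field_simp

lemma eq_Icc_min'_max'_of_ordConnected {α : Type*} [LinearOrder α] [LocallyFiniteOrder α]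
    {S : Finset α} (hS : (S : Set α).OrdConnected) (hne : S.Nonempty) :
    S = Icc (S.min' hne) (S.max' hne) := by
  ext n
  rw [mem_Icc]
  exact ⟨fun hn => ⟨S.min'_le n hn, S.le_max' n hn⟩,
    fun hn => hS.out (S.min'_mem hne) (S.max'_mem hne) hn⟩

theorem kusmin_landau {f : ℕ → ℝ} {S : Finset ℕ} (hS : (S : Set ℕ).OrdConnected)
    {δ : ℝ} (hδ : 0 < δ) {m : ℤ} (hmono : MonotoneOn (Δ_[1] f) S)
    (hf : ∀ n ∈ S, Δ_[1] f n ∈ Set.Icc (m + δ) (m + 1 - δ)) :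
    ‖∑ n ∈ S, e (f n)‖ ≤ 1 / δ := by
  rcases S.eq_empty_or_nonempty with rfl | hne
  · simpa using hδ.le
  · have hle : S.min' hne ≤ S.max' hne := S.min'_le_max' hne
    rw [eq_Icc_min'_max'_of_ordConnected hS hne] at hmono hf ⊢
    exact norm_sum_Icc_e_le hle hδ hmono hf

/-! ### The discrete second derivative test -/

lemma ordConnected_filter_of_monotoneOn {α β : Type*} [Preorder α] [Preorder β] {S : Finset α}
    (hS : (S : Set α).OrdConnected) {d : α → β} (hd : MonotoneOn d S) {T : Set β}
    [DecidablePred (d · ∈ T)] (hT : T.OrdConnected) :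
    ((S.filter (d · ∈ T) : Finset α) : Set α).OrdConnected := by
  refine ⟨fun x hx y hy z hz => ?_⟩
  simp only [coe_filter, Set.mem_ofPred_eq] at hx hy ⊢
  have hzS : z ∈ S := hS.out hx.1 hy.1 hz
  exact ⟨hzS, hT.out hx.2 hy.2 ⟨hd hx.1 hzS hz.1, hd hzS hy.1 hz.2⟩⟩

lemma card_le_add_one_of_forall_sub_le {T : Finset ℕ} {L : ℝ} (hL : 0 ≤ L)
    (hT : ∀ a ∈ T, ∀ b ∈ T, a ≤ b → (b : ℝ) - a ≤ L) : (#T : ℝ) ≤ L + 1 := by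
  rcases T.eq_empty_or_nonempty with rfl | hne
  · simpa using by linarith
  have hle : T.min' hne ≤ T.max' hne := T.min'_le_max' hne
  have hsub : T ⊆ Icc (T.min' hne) (T.max' hne) := fun n hn =>
    mem_Icc.2 ⟨T.min'_le n hn, T.le_max' n hn⟩
  have hcard : #T + T.min' hne ≤ T.max' hne + 1 := by
    have := card_le_card hsub
    rw [Nat.card_Icc] at this
    lia
  have hcard' : (#T : ℝ) + T.min' hne ≤ T.max' hne + 1 := by exact_mod_cast hcard
  linarith [hT _ (T.min'_mem hne) _ (T.max'_mem hne) hle]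

lemma card_Icc_floor_floor_add_le (x : ℝ) {V : ℝ} (hV : 0 ≤ V) :
    (#(Icc ⌊x⌋ ⌊x + V⌋) : ℝ) ≤ V + 2 := by
  have hle : ⌊x⌋ ≤ ⌊x + V⌋ := Int.floor_mono (by linarith)
  have hcard : (#(Icc ⌊x⌋ ⌊x + V⌋) : ℝ) = ⌊x + V⌋ + 1 - ⌊x⌋ := by
    exact_mod_cast Int.card_Icc_of_le _ _ (by lia)
  linarith [Int.floor_le (x + V), Int.lt_floor_add_one x]

section SecondDifference

variable {f : ℕ → ℝ} {S : Finset ℕ} {l δ : ℝ}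

lemma monotoneOn_of_forall_mul_sub_le {d : ℕ → ℝ} (hl : 0 ≤ l)
    (hd : ∀ a ∈ S, ∀ b ∈ S, a ≤ b → l * (b - a) ≤ d b - d a) : MonotoneOn d S := by
  intro a ha b hb hab
  have hab' : (0 : ℝ) ≤ b - a := sub_nonneg.2 (Nat.cast_le.2 hab)
  linarith [hd a ha b hb hab, mul_nonneg hl hab']

lemma card_le_div_add_one {d : ℕ → ℝ} (hl : 0 < l)
    (hd : ∀ a ∈ S, ∀ b ∈ S, a ≤ b → l * (b - a) ≤ d b - d a) {x w : ℝ} (hw : 0 ≤ w)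
    (hmem : ∀ n ∈ S, d n ∈ Set.Icc x (x + w)) : (#S : ℝ) ≤ w / l + 1 := by
  refine card_le_add_one_of_forall_sub_le (by positivity) fun a ha b hb hab => ?_
  rw [le_div_iff₀' hl]
  linarith [hd a ha b hb hab, (hmem a ha).1, (hmem b hb).2]

lemma norm_sum_e_floor_fiber_le (hS : (S : Set ℕ).OrdConnected) (hl : 0 < l) (hδ : 0 < δ)
    (hf : ∀ a ∈ S, ∀ b ∈ S, a ≤ b → l * (b - a) ≤ Δ_[1] f b - Δ_[1] f a) (m : ℤ) :
    ‖∑ n ∈ S with ⌊Δ_[1] f n + δ⌋ = m, e (f n)‖ ≤ 2 * δ / l + 1 + 1 / δ := by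
  have hmono := monotoneOn_of_forall_mul_sub_le hl.le hf
  set fiber := S.filter fun n => ⌊Δ_[1] f n + δ⌋ = m with hfiber
  have hnear : ‖∑ n ∈ fiber with Δ_[1] f n < m + δ, e (f n)‖ ≤ 2 * δ / l + 1 := by
    refine (norm_sum_e_le_card _ _).trans
      (card_le_div_add_one (d := Δ_[1] f) (x := m - δ) hl ?_ (by positivity) fun n hn => ?_)
    · exact fun a ha b hb => hf a (filter_subset _ _ (filter_subset _ _ ha)) b
        (filter_subset _ _ (filter_subset _ _ hb))
    · rw [hfiber, mem_filter, mem_filter, Int.floor_eq_iff] at hn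
      exact ⟨by linarith [hn.1.2.1], by linarith [hn.2]⟩
  have hfar_eq : (fiber.filter fun n => ¬Δ_[1] f n < m + δ) =
      S.filter (Δ_[1] f · ∈ Set.Ico (m + δ) (m + 1 - δ)) := by
    rw [hfiber, filter_filter]
    refine filter_congr fun n _ => ?_
    rw [Int.floor_eq_iff, not_lt, Set.mem_Ico]
    constructor
    · rintro ⟨⟨-, hlt⟩, hge⟩
      exact ⟨hge, by linarith⟩
    · rintro ⟨hge, hlt⟩
      exact ⟨⟨by linarith, by linarith⟩, hge⟩
  have hfar : ‖∑ n ∈ fiber with ¬Δ_[1] f n < m + δ, e (f n)‖ ≤ 1 / δ := by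
    rw [hfar_eq]
    exact kusmin_landau (ordConnected_filter_of_monotoneOn hS hmono Set.ordConnected_Ico) hδ
      (hmono.mono (filter_subset _ _)) fun n hn => Set.Ico_subset_Icc_self (mem_filter.1 hn).2
  rw [← sum_filter_add_sum_filter_not fiber fun n => Δ_[1] f n < m + δ]
  exact (norm_add_le _ _).trans (add_le_add hnear hfar)

theorem norm_sum_e_le_of_fwdDiff_slope (hS : (S : Set ℕ).OrdConnected) (hl : 0 < l) (hδ : 0 < δ)
    {V : ℝ} (hV : 0 ≤ V)
    (hf : ∀ a ∈ S, ∀ b ∈ S, a ≤ b → Δ_[1] f b - Δ_[1] f a ∈ Set.Icc (l * (b - a)) V) :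
    ‖∑ n ∈ S, e (f n)‖ ≤ (V + 2) * (2 * δ / l + 1 + 1 / δ) := by
  rcases S.eq_empty_or_nonempty with rfl | hne
  · simpa using by positivity
  have hslope : ∀ a ∈ S, ∀ b ∈ S, a ≤ b → l * (b - a) ≤ Δ_[1] f b - Δ_[1] f a :=
    fun a ha b hb hab => (hf a ha b hb hab).1
  set x := Δ_[1] f (S.min' hne) + δ
  have hmaps (n : ℕ) (hn : n ∈ S) : ⌊Δ_[1] f n + δ⌋ ∈ Icc ⌊x⌋ ⌊x + V⌋ := by
    have hmin := S.min'_mem hne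
    have hge := monotoneOn_of_forall_mul_sub_le hl.le hslope hmin hn (S.min'_le n hn)
    have hle := (hf _ hmin n hn (S.min'_le n hn)).2
    exact mem_Icc.2 ⟨Int.floor_mono (by linarith), Int.floor_mono (by linarith)⟩
  rw [← sum_fiberwise_of_maps_to hmaps]
  calc _ ≤ ∑ _m ∈ Icc ⌊x⌋ ⌊x + V⌋, (2 * δ / l + 1 + 1 / δ) :=
        norm_sum_le_of_le _ fun m _ => norm_sum_e_floor_fiber_le hS hl hδ hslope m
    _ = #(Icc ⌊x⌋ ⌊x + V⌋) * (2 * δ / l + 1 + 1 / δ) := by rw [sum_const, nsmul_eq_mul]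
    _ ≤ (V + 2) * (2 * δ / l + 1 + 1 / δ) := by
        gcongr
        exact card_Icc_floor_floor_add_le _ hV

end SecondDifference

/-! ### The second derivative test -/

section SecondDerivative

variable {a b l u : ℝ}

lemma sub_mem_Icc_of_hasDerivAt {g g' : ℝ → ℝ} (hg : ∀ x ∈ Set.Icc a b, HasDerivAt g (g' x) x)
    (hg' : ∀ x ∈ Set.Icc a b, g' x ∈ Set.Icc l u) {x y : ℝ} (hx : x ∈ Set.Icc a b)
    (hy : y ∈ Set.Icc a b) (hxy : x ≤ y) : g y - g x ∈ Set.Icc (l * (y - x)) (u * (y - x)) := by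
  have hcont : ContinuousOn g (Set.Icc a b) := HasDerivAt.continuousOn hg
  have hdiff : DifferentiableOn ℝ g (interior (Set.Icc a b)) := fun z hz =>
    (hg z (interior_subset hz)).differentiableAt.differentiableWithinAt
  have hderiv (z : ℝ) (hz : z ∈ interior (Set.Icc a b)) : deriv g z ∈ Set.Icc l u :=
    (hg z (interior_subset hz)).deriv ▸ hg' z (interior_subset hz)
  exact ⟨(convex_Icc a b).mul_sub_le_image_sub_of_le_deriv hcont hdiff
      (fun z hz => (hderiv z hz).1) x hx y hy hxy,
    (convex_Icc a b).image_sub_le_mul_sub_of_deriv_le hcont hdiff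
      (fun z hz => (hderiv z hz).2) x hx y hy hxy⟩

variable {F F' F'' : ℝ → ℝ}

lemma fwdDiff_sub_fwdDiff_mem_Icc (hF : ∀ x ∈ Set.Icc a b, HasDerivAt F (F' x) x)
    (hF' : ∀ x ∈ Set.Icc a b, HasDerivAt F' (F'' x) x)
    (hF'' : ∀ x ∈ Set.Icc a b, F'' x ∈ Set.Icc l u) {x y : ℝ} (hx : x ∈ Set.Icc a (b - 1))
    (hy : y ∈ Set.Icc a (b - 1)) (hxy : x ≤ y) :
    Δ_[1] F y - Δ_[1] F x ∈ Set.Icc (l * (y - x)) (u * (y - x)) := by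
  have hmem {z : ℝ} (hz : z ∈ Set.Icc a (b - 1)) : z ∈ Set.Icc a b ∧ z + 1 ∈ Set.Icc a b :=
    ⟨⟨hz.1, by linarith [hz.2]⟩, ⟨by linarith [hz.1], by linarith [hz.2]⟩⟩
  have hderiv (z : ℝ) (hz : z ∈ Set.Icc a (b - 1)) : HasDerivAt (Δ_[1] F) (Δ_[1] F' z) z :=
    ((hF _ (hmem hz).2).comp_add_const z 1).sub (hF _ (hmem hz).1)
  have hderiv_mem (z : ℝ) (hz : z ∈ Set.Icc a (b - 1)) : Δ_[1] F' z ∈ Set.Icc l u := by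
    have := sub_mem_Icc_of_hasDerivAt hF' hF'' (hmem hz).1 (hmem hz).2 (by linarith)
    rwa [add_sub_cancel_left, mul_one, mul_one] at this
  exact sub_mem_Icc_of_hasDerivAt hderiv hderiv_mem hx hy hxy

lemma norm_sum_e_le_of_hasDerivAt (hF : ∀ x ∈ Set.Icc a b, HasDerivAt F (F' x) x)
    (hF' : ∀ x ∈ Set.Icc a b, HasDerivAt F' (F'' x) x)
    (hF'' : ∀ x ∈ Set.Icc a b, F'' x ∈ Set.Icc l u) (hl : 0 < l) (hu : 0 ≤ u) (hab : a ≤ b)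
    {S : Finset ℕ} (hS : (S : Set ℕ).OrdConnected)
    (hSab : ∀ n ∈ S, (n : ℝ) ∈ Set.Icc a (b - 1)) {δ : ℝ} (hδ : 0 < δ) :
    ‖∑ n ∈ S, e (F n)‖ ≤ (u * (b - a) + 2) * (2 * δ / l + 1 + 1 / δ) := by
  refine norm_sum_e_le_of_fwdDiff_slope hS hl hδ (mul_nonneg hu (sub_nonneg.2 hab))
    fun m hm n hn hmn => ?_
  have hmn' : (m : ℝ) ≤ n := Nat.cast_le.2 hmn
  have hlen : (n : ℝ) - m ≤ b - a := by linarith [(hSab m hm).1, (hSab n hn).2]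
  obtain ⟨hge, hle⟩ := fwdDiff_sub_fwdDiff_mem_Icc hF hF' hF'' (hSab m hm) (hSab n hn) hmn'
  simp only [fwdDiff, Nat.cast_add, Nat.cast_one] at hge hle ⊢
  exact ⟨hge, hle.trans (mul_le_mul_of_nonneg_left hlen hu)⟩

theorem van_der_corput_second_derivative_test (hF : ∀ x ∈ Set.Icc a b, HasDerivAt F (F' x) x)
    (hF' : ∀ x ∈ Set.Icc a b, HasDerivAt F' (F'' x) x)
    (hF'' : ∀ x ∈ Set.Icc a b, F'' x ∈ Set.Icc l u) (hl : 0 < l) (hab : a ≤ b) {S : Finset ℕ}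
    (hS : (S : Set ℕ).OrdConnected) (hSab : ∀ n ∈ S, (n : ℝ) ∈ Set.Icc a (b - 1)) :
    ‖∑ n ∈ S, e (F n)‖ ≤ 4 * (u * (b - a) + 2) / √l := by
  have hlu : l ≤ u := Set.nonempty_Icc.1 ⟨_, hF'' a (Set.left_mem_Icc.2 hab)⟩
  have hV : 0 ≤ u * (b - a) := mul_nonneg (hl.le.trans hlu) (sub_nonneg.2 hab)
  have hsqrt : 0 < √l := sqrt_pos.2 hl
  rcases S.eq_empty_or_nonempty with rfl | ⟨n, hn⟩
  · simpa using by positivity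
  rcases le_or_gt l 1 with hl1 | hl1
  · have htwo : 2 * √l / l = 2 / √l := by rw [mul_div_assoc, sqrt_div_self', mul_one_div]
    have hone : 1 ≤ 1 / √l := (one_le_div hsqrt).2 (sqrt_le_one.2 hl1)
    calc _ ≤ (u * (b - a) + 2) * (2 * √l / l + 1 + 1 / √l) :=
          norm_sum_e_le_of_hasDerivAt hF hF' hF'' hl (hl.le.trans hlu) hab hS hSab hsqrt
      _ ≤ (u * (b - a) + 2) * (2 / √l + 1 / √l + 1 / √l) := by
          rw [htwo]
          gcongr
      _ = 4 * (u * (b - a) + 2) / √l := by ring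
  · have hcard : (#S : ℝ) ≤ (b - 1 - a) + 1 :=
      card_le_add_one_of_forall_sub_le (by linarith [(hSab n hn).1, (hSab n hn).2])
        fun m hm n hn _ => by linarith [(hSab m hm).1, (hSab n hn).2]
    have hsqrt_le : √l ≤ u := (sqrt_le_self_iff.2 (.inr hl1.le)).trans hlu
    calc _ ≤ (#S : ℝ) := norm_sum_e_le_card _ _
      _ ≤ b - a := by linarith
      _ ≤ u * (b - a) / √l := by
          rw [le_div_iff₀ hsqrt, mul_comm]
          exact mul_le_mul_of_nonneg_right hsqrt_le (sub_nonneg.2 hab)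
      _ ≤ 4 * (u * (b - a) + 2) / √l := div_le_div_of_nonneg_right (by linarith) hsqrt.le

end SecondDerivative

/-! ### The phase `k x ^ c` -/

lemma rpow_mem_uIcc {a b x : ℝ} (ha : 0 < a) (hb : 0 < b) (hx : x ∈ Set.uIcc a b) (p : ℝ) :
    x ^ p ∈ Set.uIcc (a ^ p) (b ^ p) := by
  have hpos {y : ℝ} (hy : y ∈ Set.uIcc a b) : 0 < y := (lt_min ha hb).trans_le hy.1
  rcases le_total 0 p with hp | hp
  · exact MonotoneOn.mapsTo_uIcc
      (fun y hy z _ hyz => rpow_le_rpow (hpos hy).le hyz hp) hx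
  · exact AntitoneOn.mapsTo_uIcc
      (fun y hy z _ hyz => rpow_le_rpow_of_nonpos (hpos hy) hyz hp) hx

lemma rpow_mem_Icc_min_max_mul_rpow {α β X x : ℝ} (hα : 0 < α) (hβ : 0 < β) (hX : 0 < X)
    (hx : x ∈ Set.Icc (α * X) (β * X)) (p : ℝ) :
    x ^ p ∈ Set.Icc (min (α ^ p) (β ^ p) * X ^ p) (max (α ^ p) (β ^ p) * X ^ p) := by
  have hdiv : x / X ∈ Set.Icc α β := ⟨(le_div_iff₀ hX).2 hx.1, (div_le_iff₀ hX).2 hx.2⟩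
  have hscale : x ^ p = (x / X) ^ p * X ^ p := by
    rw [← mul_rpow (hα.le.trans hdiv.1) hX.le, div_mul_cancel₀ _ hX.ne']
  obtain ⟨hmin, hmax⟩ := rpow_mem_uIcc hα hβ (Set.Icc_subset_uIcc hdiv) p
  rw [hscale]
  constructor <;> gcongr

section PowerPhase

variable {a b c k l u : ℝ}

lemma norm_sum_e_mul_rpow_le_of_pos (ha : 0 < a) (hab : a ≤ b) (hl : 0 < l)
    (hrpow : ∀ x ∈ Set.Icc a b, x ^ (c - 2) ∈ Set.Icc l u) (hk : 0 < k * (c * (c - 1)))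
    {S : Finset ℕ} (hS : (S : Set ℕ).OrdConnected)
    (hSab : ∀ n ∈ S, (n : ℝ) ∈ Set.Icc a (b - 1)) :
    ‖∑ n ∈ S, e (k * (n : ℝ) ^ c)‖ ≤
      4 * (k * (c * (c - 1)) * u * (b - a) + 2) / √(k * (c * (c - 1)) * l) := by
  have hne {x : ℝ} (hx : x ∈ Set.Icc a b) : x ≠ 0 := (ha.trans_le hx.1).ne'
  refine van_der_corput_second_derivative_test (F := fun x => k * x ^ c)
    (F' := fun x => k * (c * x ^ (c - 1))) (F'' := fun x => k * (c * (c - 1)) * x ^ (c - 2))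
    (fun x hx => ?_) (fun x hx => ?_) (fun x hx => ?_) (mul_pos hk hl) hab hS hSab
  · exact (hasDerivAt_rpow_const (.inl (hne hx))).const_mul k
  · have hderiv := hasDerivAt_rpow_const (p := c - 1) (.inl (hne hx))
    rw [show c - 1 - 1 = c - 2 by ring] at hderiv
    simpa only [mul_assoc] using (hderiv.const_mul c).const_mul k
  · obtain ⟨hge, hle⟩ := hrpow x hx
    constructor <;> gcongr

lemma norm_sum_e_mul_rpow_le (ha : 0 < a) (hab : a ≤ b) (hl : 0 < l)
    (hrpow : ∀ x ∈ Set.Icc a b, x ^ (c - 2) ∈ Set.Icc l u) (hk : k * (c * (c - 1)) ≠ 0)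
    {S : Finset ℕ} (hS : (S : Set ℕ).OrdConnected)
    (hSab : ∀ n ∈ S, (n : ℝ) ∈ Set.Icc a (b - 1)) :
    ‖∑ n ∈ S, e (k * (n : ℝ) ^ c)‖ ≤
      4 * (|k * (c * (c - 1))| * u * (b - a) + 2) / √(|k * (c * (c - 1))| * l) := by
  rcases hk.lt_or_gt with hneg | hpos
  · have := norm_sum_e_mul_rpow_le_of_pos (k := -k) ha hab hl hrpow (by linarith) hS hSab
    simpa only [abs_of_neg hneg, neg_mul, norm_sum_e_neg] using this
  · simpa only [abs_of_pos hpos] using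
      norm_sum_e_mul_rpow_le_of_pos ha hab hl hrpow hpos hS hSab

end PowerPhase

lemma rpow_half_mul_rpow_half {k X : ℝ} (hk : 0 ≤ k) (hX : 0 < X) (c : ℝ) :
    k ^ ((1 : ℝ) / 2) * X ^ (c / 2) = X * √(k * X ^ (c - 2)) := by
  rw [sqrt_mul hk, sqrt_eq_rpow, sqrt_eq_rpow, ← rpow_mul hX.le,
    show c / 2 = 1 + (c - 2) * (1 / 2) by ring, rpow_add hX, rpow_one]
  ring

lemma rpow_neg_half_mul_rpow_one_sub_half {k X : ℝ} (hk : 0 ≤ k) (hX : 0 ≤ X) (c : ℝ) :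
    k ^ (-(1 : ℝ) / 2) * X ^ (1 - c / 2) = 1 / √(k * X ^ (c - 2)) := by
  rw [sqrt_mul hk, sqrt_eq_rpow, sqrt_eq_rpow, ← rpow_mul hX, one_div, mul_inv,
    ← rpow_neg hk, ← rpow_neg hX]
  ring_nf

lemma div_sqrt_mul_le {A l u X T : ℝ} (hA : 0 < A) (hl : 0 < l) (hu : 0 ≤ u) (hX : 0 ≤ X)
    (hT : 0 < T) : 4 * (A * u * T * (2 * X) + 2) / √(A * l * T) ≤
      8 * (A * u + 1) / √(A * l) * (X * √T + 1 / √T) := by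
  calc 4 * (A * u * T * (2 * X) + 2) / √(A * l * T)
      = 8 / √(A * l) * (A * u * (X * √T) + 1 / √T) := by
        rw [sqrt_mul (by positivity)]
        field_simp
        rw [sq_sqrt hT.le]
        ring
    _ ≤ 8 / √(A * l) * ((A * u + 1) * (X * √T + 1 / √T)) := by
        gcongr
        have h₁ : 0 ≤ A * u * (1 / √T) := by positivity
        have h₂ : 0 ≤ X * √T := by positivity
        linarith
    _ = 8 * (A * u + 1) / √(A * l) * (X * √T + 1 / √T) := by ring

lemma ordConnected_filter_range_lt (N : ℕ) (y : ℝ) :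
    (((range N).filter fun n : ℕ => y < n : Finset ℕ) : Set ℕ).OrdConnected := by
  refine ⟨fun m hm n hn i hi => ?_⟩
  simp only [coe_filter, mem_range, Set.mem_ofPred_eq] at hm hn ⊢
  exact ⟨hi.2.trans_lt hn.1, hm.2.trans_le (Nat.cast_le.2 hi.1)⟩

theorem stmt_13_general (c μ : ℝ) (hc0 : c ≠ 0) (hc1 : c ≠ 1) (hμ0 : 0 < μ) (hμ1 : μ < 1) :
    ∃ C : ℝ, 0 < C ∧
      ∀ X : ℝ, 1 ≤ X → ∀ k : ℝ, k ≠ 0 →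
        ‖∑ n ∈ (Finset.range (⌊X⌋₊ + 1)).filter (fun n : ℕ => μ * X < (n : ℝ)),
            e (k * (n : ℝ) ^ c)‖ ≤
          C * (|k| ^ ((1 : ℝ) / 2) * X ^ (c / 2) + |k| ^ (-(1 : ℝ) / 2) * X ^ (1 - c / 2)) := by
  have hcc : c * (c - 1) ≠ 0 := mul_ne_zero hc0 (sub_ne_zero.2 hc1)
  set A := |c * (c - 1)|
  set l := min (μ ^ (c - 2)) (2 ^ (c - 2))
  set u := max (μ ^ (c - 2)) (2 ^ (c - 2))
  have hA : 0 < A := abs_pos.2 hcc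
  have hl : 0 < l := by positivity
  have hu : 0 < u := by positivity
  refine ⟨8 * (A * u + 1) / √(A * l), by positivity, fun X hX k hk => ?_⟩
  have hX0 : 0 < X := by linarith
  have habs : |k * (c * (c - 1))| = |k| * A := abs_mul _ _
  have hT : 0 < |k| * X ^ (c - 2) := by positivity
  have hrpow (x : ℝ) (hx : x ∈ Set.Icc (μ * X) (2 * X)) :
      x ^ (c - 2) ∈ Set.Icc (l * X ^ (c - 2)) (u * X ^ (c - 2)) :=
    rpow_mem_Icc_min_max_mul_rpow hμ0 two_pos hX0 hx (c - 2)
  have hmem (n : ℕ) (hn : n ∈ (range (⌊X⌋₊ + 1)).filter fun n : ℕ => μ * X < n) :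
      (n : ℝ) ∈ Set.Icc (μ * X) (2 * X - 1) := by
    rw [mem_filter, mem_range, Nat.lt_succ_iff, Nat.le_floor_iff hX0.le] at hn
    exact ⟨hn.2.le, by linarith [hn.1]⟩
  rw [rpow_half_mul_rpow_half (abs_nonneg k) hX0,
    rpow_neg_half_mul_rpow_one_sub_half (abs_nonneg k) hX0.le]
  refine le_trans ?_ (div_sqrt_mul_le hA hl hu.le hX0.le hT)
  calc _ ≤ 4 * (|k * (c * (c - 1))| * (u * X ^ (c - 2)) * (2 * X - μ * X) + 2) /
        √(|k * (c * (c - 1))| * (l * X ^ (c - 2))) :=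
        norm_sum_e_mul_rpow_le (mul_pos hμ0 hX0) (by gcongr; linarith) (by positivity) hrpow
          (mul_ne_zero hk hcc) (ordConnected_filter_range_lt _ _) hmem
    _ = 4 * (A * u * (|k| * X ^ (c - 2)) * (2 * X - μ * X) + 2) /
        √(A * l * (|k| * X ^ (c - 2))) := by
        rw [habs]
        ring_nf
    _ ≤ 4 * (A * u * (|k| * X ^ (c - 2)) * (2 * X) + 2) / √(A * l * (|k| * X ^ (c - 2))) := by
        gcongr
        exact sub_le_self _ (by positivity)

theorem stmt_13 (c μ : ℝ) (hc1 : 1 < c) (hc2 : c < 2) (hμ1 : 0 < μ) (hμ2 : μ < 1) :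
    ∃ C : ℝ, 0 < C ∧
      ∀ X : ℝ, 1 ≤ X → ∀ k : ℕ, 1 ≤ k →
        ‖∑ n ∈ (Finset.range (⌊X⌋₊ + 1)).filter (fun n : ℕ => μ * X < (n : ℝ)),
            e ((k : ℝ) * (n : ℝ) ^ c)‖ ≤
          C * ((k : ℝ) ^ ((1 : ℝ) / 2) * X ^ (c / 2) +
            (k : ℝ) ^ (-(1 : ℝ) / 2) * X ^ (1 - c / 2)) := by
  obtain ⟨C, hC, hbound⟩ := stmt_13_general c μ (by linarith) hc1.ne' hμ1 hμ2
  exact ⟨C, hC, fun X hX k hk => by simpa using hbound X hX k (by positivity)⟩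
end
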